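/- arXiv:2410.06148 — 4 statements merged into one kernel-verified Lean document; each statement's English description precedes it below -/
import Mathlib

section
/- Let n be an integer and let c : E(K_n) → {−1, +1} be a balanced colouring. Let H be a graph on n vertices with minimum degree δ_H. Suppose h_B and h_R are two injective graph embeddings of H into K_n with images H_B and H_R respectively, such that c(H_B) ≤ 0 ≤ c(H_R). Let I = { v ∈ V(H) : h_B(v) ≠ h_R(v) } and let Δ_I = max{ deg_H(v) : v ∈ I }. Then there exists a subgraph H' of K_n isomorphic to H such that |c(H')| ≤ Δ_I + δ_H. -/
/-!
Any permutation `π` is a product of transpositions `swap w v` that exchange one fixed vertex `w`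
with a vertex `v` moved by `π`. Taking `π = h_B⁻¹ ∘ h_R` and `w` of minimum degree, one passes from
`h_B` to `h_R` through copies of `H`, where consecutive copies differ only in edges of `H` incident
to `w` or to some `v ∈ I`. Hence each step changes the total colour by at most `2 (Δ_I + δ_H)`, and
as the total colour goes from `≤ 0` to `≥ 0`, it cannot jump over the interval
`[-(Δ_I + δ_H), Δ_I + δ_H]`.
-/

open Equiv Finset

section DiscreteIntermediateValue

variable {G M : Type*} [Group G] [AddCommGroup M] [LinearOrder M] [IsOrderedAddMonoid M]
  {S : G → M} {b : M}

lemma exists_abs_le_of_inv_mul_mem_closure {T : Set G} {g₀ g₁ : G} (hb : 0 ≤ b)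
    (hT : ∀ g, ∀ t ∈ T, |S (g * t) - S g| ≤ 2 • b) (hmem : g₀⁻¹ * g₁ ∈ Subgroup.closure T)
    (h₀ : S g₀ ≤ 0) (h₁ : 0 ≤ S g₁) : ∃ g, |S g| ≤ b := by
  by_contra! hlarge
  have nonpos_of_abs_sub_le {g g' : G} (hstep : |S g' - S g| ≤ 2 • b) (hg : S g ≤ 0) :
      S g' ≤ 0 := by
    by_contra! hg'
    have hSg : b < -S g := abs_of_nonpos hg ▸ hlarge g
    have hSg' : b < S g' := abs_of_pos hg' ▸ hlarge g'
    refine hstep.not_gt ?_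
    calc 2 • b = b + b := two_nsmul b
      _ < S g' + -S g := add_lt_add hSg' hSg
      _ = S g' - S g := (sub_eq_add_neg _ _).symm
      _ ≤ |S g' - S g| := le_abs_self _
  have nonpos_mul {t : G} (ht : t ∈ Subgroup.closure T) : S (g₀ * t) ≤ 0 := by
    induction ht using Subgroup.closure_induction_right with
    | one => simpa using h₀
    | mul_right x _ t ht ih =>
      rw [← mul_assoc]
      exact nonpos_of_abs_sub_le (hT _ t ht) ih
    | mul_inv_cancel x _ t ht ih =>
      refine nonpos_of_abs_sub_le ?_ ih
      simpa [mul_assoc, abs_sub_comm] using hT (g₀ * (x * t⁻¹)) t ht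
  have hzero : S g₁ = 0 := le_antisymm (by simpa using nonpos_mul hmem) h₁
  exact (hlarge g₁).not_ge (by rwa [hzero, abs_zero])

end DiscreteIntermediateValue

section StarTranspositions

variable {α : Type*} [Finite α] [DecidableEq α]

lemma perm_mem_of_forall_swap_apply_mem {π : Perm α} {K : Subgroup (Perm α)}
    (hK : ∀ x, swap (π x) x ∈ K) : π ∈ K := by
  have hclosure : π ∈ Subgroup.closure {σ | σ ∈ K ∧ σ.IsSwap} := by
    refine (mem_closure_isSwap fun σ hσ ↦ hσ.2).2 ⟨Set.toFinite _, fun x ↦ ?_⟩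
    by_cases hx : π x = x
    · rw [hx]
      exact MulAction.mem_orbit_self x
    · exact (swap_mem_closure_isSwap fun σ hσ ↦ hσ.2).1
        (Subgroup.subset_closure ⟨hK x, π x, x, hx, rfl⟩)
  exact (Subgroup.closure_le K).2 (fun σ hσ ↦ hσ.1) hclosure

lemma perm_mem_closure_image_swap (π : Perm α) (w : α) :
    π ∈ Subgroup.closure (swap w '' {v | π v ≠ v}) := by
  refine perm_mem_of_forall_swap_apply_mem fun x ↦ ?_
  by_cases hx : π x = x
  · rw [hx, swap_self]
    exact one_mem _
  · have swap_mem {v : α} (hv : π v ≠ v) : swap w v ∈ Subgroup.closure (swap w '' {v | π v ≠ v}) :=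
      Subgroup.subset_closure (Set.mem_image_of_mem _ hv)
    have hπx : π (π x) ≠ π x := fun h ↦ hx (π.injective h)
    exact SubmonoidClass.swap_mem_trans _ (swap_comm w (π x) ▸ swap_mem hπx) (swap_mem hx)

end StarTranspositions

/-- The total colour `c(f(H))` of the image of `H` under a map `f` of its vertices. The sum runs
over the edges of `H`, so it is the sum over the edges of the image when `f` is injective. -/
def copyWeight {V W M : Type*} [AddCommMonoid M] (H : SimpleGraph V) [Fintype H.edgeSet]
    (c : Sym2 W → M) (f : V → W) : M :=
  ∑ e ∈ H.edgeFinset, c (e.map f)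

section CopyWeight

variable {V W R : Type*} [Fintype V] (H : SimpleGraph V) [DecidableRel H.Adj]

lemma sum_edgeFinset_card_filter_mem [DecidableEq V] (s : Finset V) :
    ∑ e ∈ H.edgeFinset, #{v ∈ s | v ∈ e} = ∑ v ∈ s, H.degree v := by
  simp_rw [← H.card_incidenceFinset_eq_degree, H.incidenceFinset_eq_filter]
  exact (sum_card_bipartiteAbove_eq_sum_card_bipartiteBelow (fun v e ↦ v ∈ e)).symm

variable [CommRing R] [LinearOrder R] [IsStrictOrderedRing R]

lemma abs_copyWeight_sub_le {c : Sym2 W → R} (hc : ∀ e, ¬e.IsDiag → |c e| ≤ 1) {f g : V → W}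
    (hf : f.Injective) (hg : g.Injective) {s : Finset V} (hfg : ∀ v ∉ s, f v = g v) :
    |copyWeight H c f - copyWeight H c g| ≤ 2 * ∑ v ∈ s, (H.degree v : R) := by
  classical
  have abs_map_le_one {h : V → W} (hh : h.Injective) {e : Sym2 V} (he : e ∈ H.edgeFinset) :
      |c (e.map h)| ≤ 1 :=
    hc _ <| (Sym2.isDiag_map hh).not.2 <|
      H.not_isDiag_of_mem_edgeSet (SimpleGraph.mem_edgeFinset.1 he)
  have abs_map_sub_map_le {e : Sym2 V} (he : e ∈ H.edgeFinset) :
      |c (e.map f) - c (e.map g)| ≤ 2 * (#{v ∈ s | v ∈ e} : R) := by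
    rcases ({v ∈ s | v ∈ e} : Finset V).eq_empty_or_nonempty with hempty | hne
    · have hmap : e.map f = e.map g := Sym2.map_congr fun v hv ↦ hfg v fun hvs ↦
        notMem_empty v (hempty ▸ mem_filter.2 ⟨hvs, hv⟩)
      simp [hmap]
    · have hcard : (1 : R) ≤ #{v ∈ s | v ∈ e} := mod_cast hne.card_pos
      linarith [abs_sub (c (e.map f)) (c (e.map g)), abs_map_le_one hf he, abs_map_le_one hg he]
  calc |copyWeight H c f - copyWeight H c g|
      = |∑ e ∈ H.edgeFinset, (c (e.map f) - c (e.map g))| := by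
        rw [copyWeight, copyWeight, sum_sub_distrib]
    _ ≤ ∑ e ∈ H.edgeFinset, |c (e.map f) - c (e.map g)| := abs_sum_le_sum_abs _ _
    _ ≤ ∑ e ∈ H.edgeFinset, 2 * (#{v ∈ s | v ∈ e} : R) :=
        sum_le_sum fun e he ↦ abs_map_sub_map_le he
    _ = 2 * ∑ v ∈ s, (H.degree v : R) := by
        rw [← mul_sum, ← Nat.cast_sum, sum_edgeFinset_card_filter_mem, Nat.cast_sum]

lemma abs_copyWeight_mul_swap_sub_le [DecidableEq V] {c : Sym2 V → R}
    (hc : ∀ e, ¬e.IsDiag → |c e| ≤ 1) (π : Perm V) (u v : V) :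
    |copyWeight H c (π * swap u v) - copyWeight H c π| ≤ 2 * ((H.degree u : R) + H.degree v) := by
  rcases eq_or_ne u v with rfl | huv
  · simp only [swap_self, ← Perm.one_def, mul_one, sub_self, abs_zero]
    positivity
  · rw [← sum_pair (f := fun x ↦ (H.degree x : R)) huv]
    refine abs_copyWeight_sub_le H hc (π * swap u v).injective π.injective fun x hx ↦ ?_
    rw [mem_insert, mem_singleton, not_or] at hx
    rw [Perm.mul_apply, swap_apply_of_ne_of_ne hx.1 hx.2]

lemma exists_perm_abs_copyWeight_le {c : Sym2 V → R} (hc : ∀ e, ¬e.IsDiag → |c e| ≤ 1)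
    {Δ : ℕ} {σ τ : Perm V} (w : V) (hσ : copyWeight H c σ ≤ 0) (hτ : 0 ≤ copyWeight H c τ)
    (hΔ : ∀ v, σ v ≠ τ v → H.degree v ≤ Δ) :
    ∃ π : Perm V, |copyWeight H c π| ≤ (Δ : R) + H.degree w := by
  classical
  refine exists_abs_le_of_inv_mul_mem_closure (S := fun π : Perm V ↦ copyWeight H c π)
    (by positivity) ?_ (perm_mem_closure_image_swap (σ⁻¹ * τ) w) hσ hτ
  rintro π _ ⟨v, hv, rfl⟩
  have hστ : σ v ≠ τ v := fun h ↦ hv (by simp [← h])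
  have hdeg : (H.degree v : R) ≤ Δ := mod_cast hΔ v hστ
  have hstep := abs_copyWeight_mul_swap_sub_le H hc π w v
  rw [two_nsmul]
  linarith

theorem interpolation_lemma_general {c : Sym2 V → R} (hc : ∀ e, ¬e.IsDiag → |c e| ≤ 1)
    {Δ : ℕ} {f g : V ↪ V} (hf : copyWeight H c f ≤ 0) (hg : 0 ≤ copyWeight H c g)
    (hΔ : ∀ v, f v ≠ g v → H.degree v ≤ Δ) :
    ∃ h : V ↪ V, |copyWeight H c h| ≤ (Δ : R) + H.minDegree := by
  rcases isEmpty_or_nonempty V with hV | hV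
  · refine ⟨f, ?_⟩
    rw [le_antisymm hf (Subsingleton.elim g f ▸ hg), abs_zero]
    positivity
  · obtain ⟨w, hw⟩ := H.exists_minimal_degree_vertex
    obtain ⟨π, hπ⟩ := exists_perm_abs_copyWeight_le H hc w (σ := f.equivOfFiniteSelfEmbedding)
      (τ := g.equivOfFiniteSelfEmbedding) hf hg hΔ
    exact ⟨π.toEmbedding, hw ▸ hπ⟩

end CopyWeight

/-- interpolation lemma. Let `c` be a balanced `±1`-colouring of the
edges of `K_n`, let `H` be a graph on `n` vertices with minimum degree `δ_H`, and let
`h_B, h_R` be two embeddings of `H` into `K_n` whose images `H_B, H_R` satisfy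
`c(H_B) ≤ 0 ≤ c(H_R)`. With `I = {v : h_B v ≠ h_R v}` and `Δ_I = max{deg_H v : v ∈ I}`,
there is a copy `H'` of `H` in `K_n` with `|c(H')| ≤ Δ_I + δ_H`. -/
theorem interpolation_lemma
    (n : ℕ) (c : Sym2 (Fin n) → ℤ)
    (hc : ∀ e ∈ (⊤ : SimpleGraph (Fin n)).edgeFinset, c e = 1 ∨ c e = -1)
    (hbal : ∑ e ∈ (⊤ : SimpleGraph (Fin n)).edgeFinset, c e = 0)
    (H : SimpleGraph (Fin n)) [DecidableRel H.Adj]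
    (hB hR : Fin n ↪ Fin n)
    (hBneg : ∑ e ∈ H.edgeFinset, c (Sym2.map (⇑hB) e) ≤ 0)
    (hRpos : 0 ≤ ∑ e ∈ H.edgeFinset, c (Sym2.map (⇑hR) e))
    (ΔI : ℕ)
    (hΔI : ΔI = (Finset.univ.filter fun v : Fin n => hB v ≠ hR v).sup fun v => H.degree v) :
    ∃ f : Fin n ↪ Fin n,
      |∑ e ∈ H.edgeFinset, c (Sym2.map (⇑f) e)| ≤ (ΔI : ℤ) + H.minDegree := by
  subst hΔI
  exact interpolation_lemma_general H
    (fun e he ↦ (abs_eq zero_le_one).2 (hc e (by simpa using he)) |>.le) hBneg hRpos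
    fun v hv ↦ le_sup (f := fun v ↦ H.degree v) (mem_filter.2 ⟨mem_univ v, hv⟩)
end

section
/- Let n ≥ 5 be an integer and let ε be a real number with 1/n ≤ ε < 1/4. Then in any balanced 2-colouring of the edges of K_n by red and blue, there are at least εn + 1 vertices which are (1/4 − ε)n-balanced. -/
/-!
If a graph on `n` vertices contains at least half of all pairs, then more than half of its vertices,
namely at least `(n + εn + 1) / 2`, have degree at least `(1/4 - ε)n`: otherwise the low-degree
vertices together with the at most `b.choose 2` edges among the `b` remaining vertices account for
too few edges. Applied to the red and to the blue graph, this gives two vertex sets which, having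
total size at least `n + εn + 1`, share at least `εn + 1` vertices.
-/

open Finset

-- The left side is convex in `b`, so only the ends of `0 ≤ b < (n + e + 1) / 2` matter.
lemma low_degree_edge_bound_lt {n b e : ℝ} (he : 1 ≤ e) (hn : 4 * e ≤ n) (hb : 0 ≤ b)
    (hbn : 2 * b < n + e + 1) :
    (n - b) * (n / 4 - e) + b * (b - 1) / 2 < n * (n - 1) / 4 := by
  have at_right_end : (e + 1) * (5 * e - 1) ≤ n * (3 * e - 1) :=
    calc (e + 1) * (5 * e - 1)
      _ ≤ 4 * e * (3 * e - 1) := by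
        linarith [mul_nonneg (by linarith : 0 ≤ 7 * e - 1) (sub_nonneg.2 he)]
      _ ≤ n * (3 * e - 1) := mul_le_mul_of_nonneg_right hn (by linarith)
  have chord : b * (2 * b - 2 - n + 4 * e) < n * (4 * e - 1) :=
    calc b * (2 * b - 2 - n + 4 * e)
      _ ≤ b * (5 * e - 1) := mul_le_mul_of_nonneg_left (by linarith) hb
      _ < (n + e + 1) / 2 * (5 * e - 1) := mul_lt_mul_of_pos_right (by linarith) (by linarith)
      _ ≤ n * (4 * e - 1) := by linarith
  linarith

section Graph

variable {V : Type*} [Fintype V] (G : SimpleGraph V) [DecidableRel G.Adj]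

lemma edgeFinset_subset_biUnion_incidenceFinset_union [DecidableEq V] (s : Finset V) :
    G.edgeFinset ⊆ (s.biUnion fun v => G.incidenceFinset v) ∪
      sᶜ.offDiag.image fun p => s(p.1, p.2) := by
  intro e he
  induction e with | _ x y
  have hxy : G.Adj x y := by simpa using he
  simp only [mem_union, mem_biUnion, mem_image, mem_offDiag, mem_compl]
  by_cases hx : x ∈ s
  · exact .inl ⟨x, hx, by simp [hxy]⟩
  by_cases hy : y ∈ s
  · exact .inl ⟨y, hy, by simp [SimpleGraph.mk'_mem_incidenceSet_iff, hxy]⟩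
  exact .inr ⟨(x, y), ⟨hx, hy, hxy.ne⟩, rfl⟩

lemma card_edgeFinset_le_sum_degree_add_choose_two [DecidableEq V] (s : Finset V) :
    #G.edgeFinset ≤ ∑ v ∈ s, G.degree v + (#sᶜ).choose 2 :=
  calc #G.edgeFinset
    _ ≤ #(s.biUnion fun v => G.incidenceFinset v) + #(sᶜ.offDiag.image fun p => s(p.1, p.2)) :=
      (card_le_card (edgeFinset_subset_biUnion_incidenceFinset_union G s)).trans
        (card_union_le _ _)
    _ ≤ ∑ v ∈ s, #(G.incidenceFinset v) + (#sᶜ).choose 2 :=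
      add_le_add card_biUnion_le (Sym2.card_image_offDiag _).le
    _ = ∑ v ∈ s, G.degree v + (#sᶜ).choose 2 := by
      simp only [SimpleGraph.card_incidenceFinset_eq_degree]

lemma card_edgeFinset_le_card_low_degree_mul_add (d : ℝ) :
    (#G.edgeFinset : ℝ) ≤ (Fintype.card V - #{v | d ≤ G.degree v}) * d +
      #{v | d ≤ G.degree v} * (#{v | d ≤ G.degree v} - 1) / 2 := by
  classical
  set high : Finset V := {v | d ≤ G.degree v} with high_def
  have low_degree_sum : ∑ v ∈ highᶜ, (G.degree v : ℝ) ≤ #highᶜ * d := by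
    rw [← nsmul_eq_mul]
    refine sum_le_card_nsmul _ _ _ fun v hv => ?_
    simp only [high_def, mem_compl, mem_filter_univ, not_le] at hv
    exact hv.le
  have edge_bound := card_edgeFinset_le_sum_degree_add_choose_two G highᶜ
  rw [compl_compl, ← Nat.cast_le (α := ℝ)] at edge_bound
  push_cast [Nat.cast_choose_two] at edge_bound
  rw [card_compl, Nat.cast_sub (card_le_univ high)] at low_degree_sum
  linarith

lemma card_add_le_two_mul_card_high_degree {ε : ℝ} (hε₁ : 1 ≤ ε * Fintype.card V)
    (hε₂ : ε ≤ 1 / 4) (hG : (Fintype.card V).choose 2 ≤ 2 * #G.edgeFinset) :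
    Fintype.card V + ε * Fintype.card V + 1 ≤
      2 * (#{v | (1 / 4 - ε) * Fintype.card V ≤ G.degree v} : ℝ) := by
  by_contra! few_high
  have hε₂' : 4 * (ε * Fintype.card V) ≤ Fintype.card V := by
    linarith [mul_le_mul_of_nonneg_right hε₂ (Nat.cast_nonneg (α := ℝ) (Fintype.card V))]
  have few_edges := low_degree_edge_bound_lt hε₁ hε₂' (Nat.cast_nonneg _) few_high
  have edge_bound := card_edgeFinset_le_card_low_degree_mul_add G ((1 / 4 - ε) * Fintype.card V)
  rw [← Nat.cast_le (α := ℝ)] at hG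
  push_cast [Nat.cast_choose_two] at hG
  linarith

theorem many_balanced_vertices_general (H : SimpleGraph V) [DecidableRel H.Adj] {ε : ℝ}
    (hε₁ : 1 ≤ ε * Fintype.card V) (hε₂ : ε ≤ 1 / 4)
    (hG : (Fintype.card V).choose 2 ≤ 2 * #G.edgeFinset)
    (hH : (Fintype.card V).choose 2 ≤ 2 * #H.edgeFinset) :
    ε * Fintype.card V + 1 ≤
      (#{v | (1 / 4 - ε) * Fintype.card V ≤ G.degree v ∧
        (1 / 4 - ε) * Fintype.card V ≤ H.degree v} : ℝ) := by
  classical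
  have card_highG := card_add_le_two_mul_card_high_degree G hε₁ hε₂ hG
  have card_highH := card_add_le_two_mul_card_high_degree H hε₁ hε₂ hH
  rw [filter_and]
  set highG : Finset V := {v | (1 / 4 - ε) * Fintype.card V ≤ G.degree v}
  set highH : Finset V := {v | (1 / 4 - ε) * Fintype.card V ≤ H.degree v}
  have incl_excl : (#(highG ∪ highH) + #(highG ∩ highH) : ℝ) = #highG + #highH :=
    mod_cast card_union_add_card_inter highG highH
  have union_le : (#(highG ∪ highH) : ℝ) ≤ Fintype.card V := mod_cast card_le_univ _
  linarith

end Graph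

section Color

variable {V K : Type*}

/-- The graph of the edges which receive color `k` under `c`. The values of `c` on the diagonal of
`Sym2 V`, which are not edges of the complete graph, are ignored. -/
def colorGraph (c : Sym2 V → K) (k : K) : SimpleGraph V :=
  .fromEdgeSet {e | c e = k}

lemma colorGraph_adj {c : Sym2 V → K} {k : K} {v w : V} :
    (colorGraph c k).Adj v w ↔ v ≠ w ∧ c s(v, w) = k := by
  simp [colorGraph, and_comm]

variable [DecidableEq V] [DecidableEq K] (c : Sym2 V → K)

instance (k : K) : DecidableRel (colorGraph c k).Adj :=
  fun _ _ => decidable_of_iff' _ colorGraph_adj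

variable [Fintype V]

lemma edgeFinset_colorGraph (k : K) :
    (colorGraph c k).edgeFinset = {e ∈ (⊤ : SimpleGraph V).edgeFinset | c e = k} := by
  ext e
  induction e with | _ x y
  simp [colorGraph_adj]

lemma degree_colorGraph (k : K) (v : V) :
    (colorGraph c k).degree v = #{w | w ≠ v ∧ c s(v, w) = k} := by
  rw [← SimpleGraph.card_neighborFinset_eq_degree]
  congr 1
  ext w
  simp [colorGraph_adj, eq_comm]

lemma card_edgeFinset_colorGraph_add {r b : K} (hrb : r ≠ b)
    (hc : ∀ e ∈ (⊤ : SimpleGraph V).edgeFinset, c e = r ∨ c e = b) :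
    #(colorGraph c r).edgeFinset + #(colorGraph c b).edgeFinset = (Fintype.card V).choose 2 := by
  have blue_iff_not_red : ∀ e ∈ (⊤ : SimpleGraph V).edgeFinset, c e = b ↔ ¬ c e = r := by
    intro e he
    rcases hc e he with h | h <;> simp [h, hrb, hrb.symm]
  rw [edgeFinset_colorGraph, edgeFinset_colorGraph, filter_congr blue_iff_not_red,
    card_filter_add_card_filter_not, SimpleGraph.card_edgeFinset_top_eq_card_choose_two]

end Color

/-- Let `n ≥ 5` and `1/n ≤ ε < 1/4`. In any balanced red/blue
colouring of the edges of `K_n` (red = `+1`, blue = `-1`), there are at least `εn + 1`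
vertices which are `(1/4 - ε)n`-balanced, i.e. incident to at least `(1/4 - ε)n` red
edges and at least `(1/4 - ε)n` blue edges. -/
theorem many_balanced_vertices
    (n : ℕ) (hn : 5 ≤ n) (ε : ℝ) (hε₁ : 1 / (n : ℝ) ≤ ε) (hε₂ : ε < 1 / 4)
    (c : Sym2 (Fin n) → ℤ)
    (hc : ∀ e ∈ (⊤ : SimpleGraph (Fin n)).edgeFinset, c e = 1 ∨ c e = -1)
    (hbal : ((⊤ : SimpleGraph (Fin n)).edgeFinset.filter fun e => c e = 1).card =
            ((⊤ : SimpleGraph (Fin n)).edgeFinset.filter fun e => c e = -1).card) :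
    ε * n + 1 ≤
      ((Finset.univ.filter fun v : Fin n =>
          (1 / 4 - ε) * n ≤ ((Finset.univ.filter fun w => w ≠ v ∧ c s(v, w) = 1).card : ℝ) ∧
          (1 / 4 - ε) * n ≤ ((Finset.univ.filter fun w => w ≠ v ∧ c s(v, w) = -1).card : ℝ)).card
        : ℝ) := by
  have hn_pos : (0 : ℝ) < n := mod_cast (by omega : 0 < n)
  have hεn : 1 ≤ ε * Fintype.card (Fin n) := by
    rwa [Fintype.card_fin, ← div_le_iff₀ hn_pos]
  have total := card_edgeFinset_colorGraph_add c (by decide : (1 : ℤ) ≠ -1) hc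
  have balanced : #(colorGraph c 1).edgeFinset = #(colorGraph c (-1)).edgeFinset := by
    simpa only [edgeFinset_colorGraph] using hbal
  simpa only [degree_colorGraph, Fintype.card_fin] using
    many_balanced_vertices_general (colorGraph c 1) (colorGraph c (-1)) hεn hε₂.le
      (by omega) (by omega)
end

section
/- Let n ≥ 32 be an integer and let ξ be a real number with −1/4 + 16/n ≤ ξ ≤ 1/4. Then there exists a real number ε with 1/n ≤ ε ≤ 1/8 such that max( 2/ε + 1 , 2 + max(2εn + ξn, 0) ) ≤ (3 + ξn)/2 + √( (1 + ξn)² + 16n )/2. In particular, the infimum over ε ∈ [1/n, 1/8] of max( 2/ε + 1 , 2 + max(2εn + ξn, 0) ) is at most (3 + ξn)/2 + √( (1 + ξn)² + 16n )/2. -/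
/-!
As `ε > 0` grows, `2 / ε + 1` decreases and `2 + (2εn + ξn)₊` increases, so their maximum is
smallest where the two agree. Where `2εn + ξn ≥ 0` they agree exactly when
`2nε² + (1 + ξn)ε = 2`. The positive root of this equation lies in `[1/n, 1/8]` precisely when
`-1/4 + 15/n ≤ ξ ≤ 2 - 3/n`, and the common value there is `(3 + ξn)/2 + √((1 + ξn)² + 16n)/2`.
-/

theorem isLeast_image_max_of_antitoneOn_of_monotoneOn {α β : Type*} [LinearOrder α]
    [LinearOrder β] {f g : α → β} {s : Set α} {x₀ : α} (hf : AntitoneOn f s)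
    (hg : MonotoneOn g s) (hx₀ : x₀ ∈ s) (hfg : f x₀ = g x₀) :
    IsLeast ((fun x => max (f x) (g x)) '' s) (f x₀) := by
  refine ⟨⟨x₀, hx₀, by simp only [← hfg, max_self]⟩, ?_⟩
  rintro _ ⟨x, hx, rfl⟩
  rcases le_total x x₀ with hle | hle
  · exact le_max_of_le_left (hf hx hx₀ hle)
  · exact le_max_of_le_right (hfg.trans_le (hg hx₀ hx hle))

/-- The positive root in `ε` of `2nε² + (1 + a)ε = 2` for `n > 0`, that is, the point `ε > 0` at
which the decreasing function `2 / ε + 1` meets the increasing function `2 + (2εn + a)`. In the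
theorem, `a = ξn`. -/
noncomputable def balancePoint (n a : ℝ) : ℝ :=
  (√((1 + a) ^ 2 + 16 * n) - (1 + a)) / (4 * n)

section balancePoint

variable {n a x : ℝ}

theorem four_mul_balancePoint_add (hn : n ≠ 0) (a : ℝ) :
    4 * n * balancePoint n a + (1 + a) = √((1 + a) ^ 2 + 16 * n) := by
  rw [balancePoint, mul_div_cancel₀ _ (by positivity), sub_add_cancel]

theorem balancePoint_pos (hn : 0 < n) (a : ℝ) : 0 < balancePoint n a := by
  have hlt : 1 + a < √((1 + a) ^ 2 + 16 * n) := Real.lt_sqrt_of_sq_lt (by linarith)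
  exact div_pos (sub_pos.2 hlt) (by positivity)

theorem balancePoint_quadratic (hn : 0 < n) (a : ℝ) :
    2 * n * balancePoint n a ^ 2 + (1 + a) * balancePoint n a = 2 := by
  have hsq : (4 * n * balancePoint n a + (1 + a)) ^ 2 = (1 + a) ^ 2 + 16 * n := by
    rw [four_mul_balancePoint_add hn.ne', Real.sq_sqrt (by positivity)]
  apply mul_left_cancel₀ (show 8 * n ≠ 0 by positivity)
  linear_combination hsq

theorem two_div_balancePoint (hn : 0 < n) (a : ℝ) :
    2 / balancePoint n a = 2 * balancePoint n a * n + (1 + a) := by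
  rw [div_eq_iff (balancePoint_pos hn a).ne']
  linear_combination -balancePoint_quadratic hn a

theorem two_div_balancePoint_add_one (hn : 0 < n) (a : ℝ) :
    2 / balancePoint n a + 1 = (3 + a) / 2 + √((1 + a) ^ 2 + 16 * n) / 2 := by
  rw [two_div_balancePoint hn, ← four_mul_balancePoint_add hn.ne']
  ring

theorem balancePoint_le (hn : 0 < n) (hx : 0 < x) (h : 2 / x ≤ 2 * x * n + (1 + a)) :
    balancePoint n a ≤ x := by
  by_contra! hlt
  refine h.not_gt ?_
  calc 2 * x * n + (1 + a) < 2 * balancePoint n a * n + (1 + a) := by gcongr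
    _ = 2 / balancePoint n a := (two_div_balancePoint hn a).symm
    _ < 2 / x := by gcongr

theorem le_balancePoint (hn : 0 < n) (h : 2 * x * n + (1 + a) ≤ 2 / x) :
    x ≤ balancePoint n a := by
  have hpos : 0 < balancePoint n a := balancePoint_pos hn a
  by_contra! hlt
  refine h.not_gt ?_
  calc 2 / x < 2 / balancePoint n a := by gcongr
    _ = 2 * balancePoint n a * n + (1 + a) := two_div_balancePoint hn a
    _ < 2 * x * n + (1 + a) := by gcongr

theorem balancePoint_mem_Icc (hn : 0 < n) (ha₁ : 15 - n / 4 ≤ a) (ha₂ : a ≤ 2 * n - 3) :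
    balancePoint n a ∈ Set.Icc (1 / n) (1 / 8) := by
  refine ⟨le_balancePoint hn ?_, balancePoint_le hn (by norm_num) (by linarith)⟩
  calc 2 * (1 / n) * n + (1 + a) = 3 + a := by field_simp; ring
    _ ≤ 2 * n := by linarith
    _ = 2 / (1 / n) := by field_simp

theorem two_mul_balancePoint_mul_add_nonneg (hn : 0 < n) (h : balancePoint n a ≤ 2) :
    0 ≤ 2 * balancePoint n a * n + a := by
  have hone : 1 ≤ 2 / balancePoint n a := (one_le_div (balancePoint_pos hn a)).2 h
  linarith [two_div_balancePoint hn a]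

end balancePoint

theorem antitoneOn_two_div_add_one {s : Set ℝ} (hs : s ⊆ Set.Ioi 0) :
    AntitoneOn (fun ε : ℝ => 2 / ε + 1) s := by
  intro x hx y _ hxy
  have hpos : 0 < x := hs hx
  dsimp only
  gcongr

theorem monotone_two_add_max_zero {n : ℝ} (hn : 0 ≤ n) (a : ℝ) :
    Monotone (fun ε : ℝ => 2 + max (2 * ε * n + a) 0) := by
  intro x y hxy
  dsimp only
  gcongr

theorem optimisation_lemma_general {n ξ : ℝ} (hn : 0 < n)
    (hξ₁ : -(1 / 4) + 15 / n ≤ ξ) (hξ₂ : ξ ≤ 2 - 3 / n) :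
    IsLeast ((fun ε : ℝ => max (2 / ε + 1) (2 + max (2 * ε * n + ξ * n) 0)) ''
        Set.Icc (1 / n) (1 / 8))
      ((3 + ξ * n) / 2 + √((1 + ξ * n) ^ 2 + 16 * n) / 2) := by
  have hlower : 15 - n / 4 ≤ ξ * n :=
    calc 15 - n / 4 = (-(1 / 4) + 15 / n) * n := by field_simp; ring
      _ ≤ ξ * n := by gcongr
  have hupper : ξ * n ≤ 2 * n - 3 :=
    calc ξ * n ≤ (2 - 3 / n) * n := by gcongr
      _ = 2 * n - 3 := by field_simp
  have hmem : balancePoint n (ξ * n) ∈ Set.Icc (1 / n) (1 / 8) :=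
    balancePoint_mem_Icc hn hlower hupper
  have hnonneg : 0 ≤ 2 * balancePoint n (ξ * n) * n + ξ * n :=
    two_mul_balancePoint_mul_add_nonneg hn (hmem.2.trans (by norm_num))
  have hIcc : Set.Icc (1 / n) (1 / 8) ⊆ Set.Ioi 0 := fun ε hε =>
    (one_div_pos.2 hn).trans_le hε.1
  rw [← two_div_balancePoint_add_one hn]
  refine isLeast_image_max_of_antitoneOn_of_monotoneOn (antitoneOn_two_div_add_one hIcc)
    ((monotone_two_add_max_zero hn.le _).monotoneOn _) hmem ?_
  rw [max_eq_left hnonneg, two_div_balancePoint hn]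
  ring

/-- optimisation lemma. For an integer `n ≥ 32` and a real
`-1/4 + 16/n ≤ ξ ≤ 1/4`, there exists `ε ∈ [1/n, 1/8]` with
`max (2/ε + 1) (2 + (2εn + ξn)₊) ≤ (3 + ξn)/2 + √((1 + ξn)² + 16n)/2`; in particular
the infimum over `ε ∈ [1/n, 1/8]` of the left-hand side is at most the right-hand
side. -/
theorem optimisation_lemma
    (n : ℕ) (hn : 32 ≤ n) (ξ : ℝ)
    (hξ₁ : -(1 / 4) + 16 / (n : ℝ) ≤ ξ) (hξ₂ : ξ ≤ 1 / 4) :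
    (∃ ε : ℝ, 1 / (n : ℝ) ≤ ε ∧ ε ≤ 1 / 8 ∧
        max (2 / ε + 1) (2 + max (2 * ε * n + ξ * n) 0) ≤
          (3 + ξ * n) / 2 + Real.sqrt ((1 + ξ * n) ^ 2 + 16 * n) / 2) ∧
      sInf ((fun ε : ℝ => max (2 / ε + 1) (2 + max (2 * ε * n + ξ * n) 0)) ''
          Set.Icc (1 / (n : ℝ)) (1 / 8)) ≤
        (3 + ξ * n) / 2 + Real.sqrt ((1 + ξ * n) ^ 2 + 16 * n) / 2 := by
  have hn_real : (32 : ℝ) ≤ n := by exact_mod_cast hn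
  have hlower : -(1 / 4) + 15 / (n : ℝ) ≤ ξ := le_trans (by gcongr; norm_num) hξ₁
  have hupper : ξ ≤ 2 - 3 / (n : ℝ) := by
    have hdiv : 3 / (n : ℝ) ≤ 3 / 32 := by gcongr
    linarith
  have hleast := optimisation_lemma_general (by linarith) hlower hupper
  obtain ⟨ε, hε, heq⟩ := hleast.1
  exact ⟨⟨ε, hε.1, hε.2, heq.le⟩, hleast.csInf_eq.le⟩
end

section
/- There exists ε₀ > 0 such that for every real ε with 0 < ε < ε₀ there exists n₀ such that for every integer n ≥ n₀ there is a red-blue colouring c : E(K_n) → {−1, +1} (with red = +1, blue = −1) whose red edge density d_R (the number of red edges divided by n(n−1)/2) satisfies 1/2 − ε ≤ d_R ≤ 1/2 + ε, and such that every copy T in K_n of the star on n vertices satisfies |c(T)| ≥ (1/2 + ε²)n. -/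
/-!
Let `s : G → {1, -1}` be a two-colouring of a finite abelian group with mean `μ`. On `G × G`, colour
a pair with equal `s`-values of the first coordinates by that common value, and every other pair by
`-s (b₁ + b₂)`, where `b₁`, `b₂` are the second coordinates. For fixed `b₁` the sum `b₁ + b₂` is
equidistributed, so the cross pairs at each vertex have mean exactly `-μ`. With `(1 ± μ) / 2` the
proportions of the two classes, the mean colour at a vertex is therefore `± (1 + μ ^ 2) / 2`, and
the mean over all pairs is `μ (1 + μ ^ 2) / 2`.

Blowing this pattern up along an equitable map `Fin n → G × G` realises these means with an error
of `O(1)` in each star sum and `O(n)` in their total. For small `ε`, any `μ` between `3 ε / 2` and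
`3 ε` makes `(1 + μ ^ 2) / 2` exceed `1 / 2 + ε ^ 2` while `μ (1 + μ ^ 2) / 2` stays below `2 ε`,
the bound on the mean that corresponds to red density within `ε` of `1 / 2`.
-/

section

open Finset Filter
open scoped BigOperators

section Equitable

variable {α V : Type*} [Fintype α] [Fintype V] [DecidableEq V]

/-- A map between finite types all of whose fibres have, up to an error of one, the average size.
Pulling a colouring of pairs back along such a map nearly preserves its averages. -/
def IsEquitable (φ : α → V) : Prop :=
  ∀ v, |(#{x | φ x = v} : ℝ) - Fintype.card α / Fintype.card V| ≤ 1

lemma abs_count_modEq_sub_div_le_one {m : ℕ} (hm : 0 < m) (n v : ℕ) :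
    |(n.count (· ≡ v [MOD m]) : ℝ) - n / m| ≤ 1 := by
  have hm' : (0 : ℝ) < m := by exact_mod_cast hm
  have hv : ((v % m : ℕ) : ℝ) / m ≤ 1 := (div_le_one hm').2 (by exact_mod_cast (v.mod_lt hm).le)
  have hv₀ : 0 ≤ ((v % m : ℕ) : ℝ) / m := by positivity
  have hcount : (n.count (· ≡ v [MOD m]) : ℝ) = ⌈(n : ℝ) / m - ((v % m : ℕ) : ℝ) / m⌉ := by
    have h := Nat.count_modEq_card_eq_ceil n hm v
    rw [← Rat.ceil_cast (α := ℝ)] at h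
    push_cast [sub_div] at h
    exact_mod_cast h
  rw [hcount, abs_le]
  constructor
  · linarith [Int.le_ceil ((n : ℝ) / m - ((v % m : ℕ) : ℝ) / m)]
  · linarith [Int.ceil_lt_add_one ((n : ℝ) / m - ((v % m : ℕ) : ℝ) / m)]

lemma exists_isEquitable [Nonempty V] (n : ℕ) : ∃ φ : Fin n → V, IsEquitable φ := by
  set m := Fintype.card V
  have hm : 0 < m := Fintype.card_pos
  let e : Fin m ≃ V := (Fintype.equivFin V).symm
  refine ⟨fun x ↦ e ⟨x % m, Nat.mod_lt _ hm⟩, fun v ↦ ?_⟩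
  have hfibre : #{x : Fin n | e ⟨x % m, Nat.mod_lt _ hm⟩ = v} =
      n.count (· ≡ (e.symm v : ℕ) [MOD m]) := by
    rw [Nat.count_eq_card_filter_range, card_filter, card_filter, ← Fin.sum_univ_eq_sum_range]
    refine sum_congr rfl fun x _ ↦ if_congr ?_ rfl rfl
    rw [← Equiv.eq_symm_apply, Fin.ext_iff, Nat.ModEq, Nat.mod_eq_of_lt (e.symm v).isLt]
  rw [hfibre, Fintype.card_fin]
  exact abs_count_modEq_sub_div_le_one hm n _

lemma IsEquitable.abs_sum_comp_sub_card_mul_expect_le {φ : α → V} (hφ : IsEquitable φ)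
    {f : V → ℝ} (hf : ∀ v, |f v| ≤ 1) :
    |∑ x, f (φ x) - Fintype.card α * 𝔼 v, f v| ≤ Fintype.card V := by
  have hsum : ∑ x, f (φ x) - Fintype.card α * 𝔼 v, f v =
      ∑ v, ((#{x | φ x = v} : ℝ) - Fintype.card α / Fintype.card V) * f v := by
    rw [Fintype.expect_eq_sum_div_card, ← sum_fiberwise' univ φ f]
    simp only [sum_const, nsmul_eq_mul, sub_mul, sum_sub_distrib, ← mul_sum]
    ring
  calc |∑ x, f (φ x) - Fintype.card α * 𝔼 v, f v|
      ≤ ∑ v, |((#{x | φ x = v} : ℝ) - Fintype.card α / Fintype.card V) * f v| :=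
        hsum ▸ abs_sum_le_sum_abs _ _
    _ ≤ ∑ _v : V, (1 : ℝ) := by
        gcongr with v
        rw [abs_mul]
        exact mul_le_one₀ (hφ v) (abs_nonneg _) (hf v)
    _ = Fintype.card V := by simp

end Equitable

lemma sum_sum_neighborFinset_eq_two_nsmul_sum_edgeFinset {V M : Type*} [Fintype V]
    [AddCommMonoid M] (G : SimpleGraph V) [DecidableRel G.Adj] (f : Sym2 V → M) :
    ∑ x, ∑ w ∈ G.neighborFinset x, f s(x, w) = 2 • ∑ e ∈ G.edgeFinset, f e := by
  classical
  calc ∑ x, ∑ w ∈ G.neighborFinset x, f s(x, w)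
      = ∑ d : G.Dart, f d.edge := by
        rw [Finset.sum_sigma']
        refine Finset.sum_bij' (fun p hp ↦ ⟨(p.1, p.2), by simpa using hp⟩)
          (fun d _ ↦ ⟨d.fst, d.snd⟩) ?_ ?_ ?_ ?_ ?_ <;> simp [SimpleGraph.Dart.adj]
    _ = ∑ e ∈ G.edgeFinset, ∑ d : G.Dart with d.edge = e, f e :=
        (sum_fiberwise_of_maps_to' (fun d _ ↦ by simp) f).symm
    _ = 2 • ∑ e ∈ G.edgeFinset, f e := by
        rw [smul_sum]
        refine sum_congr rfl fun e he ↦ ?_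
        rw [sum_const, G.dart_edge_fiber_card e (SimpleGraph.mem_edgeFinset.1 he)]

lemma sum_units_int_eq_two_mul_card_sub_card {ι : Type*} (s : Finset ι) (c : ι → ℤˣ) :
    ∑ i ∈ s, ((c i : ℤ) : ℝ) = 2 * #{i ∈ s | (c i : ℤ) = 1} - #s := by
  have hc (i : ι) : ((c i : ℤ) : ℝ) = 2 * (if (c i : ℤ) = 1 then 1 else 0) - 1 := by
    obtain h | h := Int.units_eq_one_or (c i) <;> norm_num [h]
  simp only [hc, sum_sub_distrib, ← mul_sum, sum_boole, sum_const, nsmul_one]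

section Stars

variable {V : Type*} [Fintype V] [DecidableEq V]

/-- The weight `c(T)` of the spanning star `T` centred at `x`. Colourings take values in `ℤˣ`, whose
elements are exactly `1` and `-1`; the values on the diagonal of `Sym2 V` are irrelevant. -/
def starSum (c : Sym2 V → ℤˣ) (x : V) : ℝ :=
  ∑ w with w ≠ x, ((c s(x, w) : ℤ) : ℝ)

lemma sum_starSum_eq (c : Sym2 V → ℤˣ) :
    ∑ x, starSum c x = 4 * #{e ∈ (⊤ : SimpleGraph V).edgeFinset | (c e : ℤ) = 1} -
      Fintype.card V * (Fintype.card V - 1) := by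
  have h := sum_sum_neighborFinset_eq_two_nsmul_sum_edgeFinset (⊤ : SimpleGraph V)
    fun e ↦ ((c e : ℤ) : ℝ)
  rw [sum_units_int_eq_two_mul_card_sub_card,
    SimpleGraph.card_edgeFinset_top_eq_card_choose_two, Nat.cast_choose_two] at h
  simp only [starSum, filter_ne', ← compl_singleton, ← SimpleGraph.neighborFinset_top, h,
    nsmul_eq_mul]
  push_cast
  ring

lemma abs_redDensity_sub_half_le (c : Sym2 V → ℤˣ) (hV : 2 ≤ Fintype.card V) {ε : ℝ}
    (hc : |∑ x, starSum c x| ≤ 2 * ε * (Fintype.card V * (Fintype.card V - 1))) :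
    |(#{e ∈ (⊤ : SimpleGraph V).edgeFinset | (c e : ℤ) = 1} : ℝ) /
      (Fintype.card V * (Fintype.card V - 1) / 2) - 1 / 2| ≤ ε := by
  have hV' : (2 : ℝ) ≤ Fintype.card V := by exact_mod_cast hV
  have hpairs : (0 : ℝ) < Fintype.card V * (Fintype.card V - 1) :=
    mul_pos (by linarith) (by linarith)
  have hdensity : (#{e ∈ (⊤ : SimpleGraph V).edgeFinset | (c e : ℤ) = 1} : ℝ) /
      (Fintype.card V * (Fintype.card V - 1) / 2) - 1 / 2 =
      (∑ x, starSum c x) / (2 * (Fintype.card V * (Fintype.card V - 1))) := by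
    rw [sum_starSum_eq]
    generalize (Fintype.card V : ℝ) * (Fintype.card V - 1) = D at hpairs
    field_simp
    ring
  rw [hdensity, abs_div, abs_of_pos (mul_pos two_pos hpairs), div_le_iff₀ (by positivity)]
  linarith

end Stars

section BlowUp

variable {V : Type*} [Fintype V]

/-- The average weight of the pairs containing `v`. The loop `s(v, v)` counts: in a blow-up of `P`
it becomes the edges inside the class of `v`. -/
noncomputable def rowMean (P : Sym2 V → ℤˣ) (v : V) : ℝ :=
  𝔼 w, ((P s(v, w) : ℤ) : ℝ)

lemma abs_rowMean_le_one [Nonempty V] (P : Sym2 V → ℤˣ) (v : V) : |rowMean P v| ≤ 1 :=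
  (abs_expect_le _ _).trans (expect_le univ_nonempty fun _ _ ↦ (abs_unit_intCast _).le)

variable {α : Type*} [Fintype α] [DecidableEq α] [DecidableEq V] {φ : α → V}

lemma IsEquitable.abs_starSum_sub_le (hφ : IsEquitable φ) (P : Sym2 V → ℤˣ) (x : α) :
    |starSum (P ∘ Sym2.map φ) x - Fintype.card α * rowMean P (φ x)| ≤ Fintype.card V + 1 := by
  have hstar : starSum (P ∘ Sym2.map φ) x =
      ∑ w, ((P s(φ x, φ w) : ℤ) : ℝ) - ((P s(φ x, φ x) : ℤ) : ℝ) := by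
    rw [starSum, filter_ne', sum_erase_eq_sub (mem_univ x)]
    rfl
  have hrow := hφ.abs_sum_comp_sub_card_mul_expect_le
    (f := fun w ↦ ((P s(φ x, w) : ℤ) : ℝ)) fun _ ↦ (abs_unit_intCast _).le
  rw [hstar, sub_right_comm]
  exact (abs_sub _ _).trans (add_le_add hrow (abs_unit_intCast _).le)

lemma IsEquitable.abs_sum_starSum_sub_le [Nonempty V] (hφ : IsEquitable φ) (P : Sym2 V → ℤˣ) :
    |∑ x, starSum (P ∘ Sym2.map φ) x - Fintype.card α ^ 2 * 𝔼 v, rowMean P v| ≤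
      Fintype.card α * (2 * Fintype.card V + 1) := by
  have hrows : |∑ x, (starSum (P ∘ Sym2.map φ) x - Fintype.card α * rowMean P (φ x))| ≤
      Fintype.card α * (Fintype.card V + 1 : ℝ) := by
    refine (abs_sum_le_sum_abs _ _).trans ?_
    refine (sum_le_card_nsmul _ _ _ fun x _ ↦ hφ.abs_starSum_sub_le P x).trans_eq ?_
    rw [nsmul_eq_mul, card_univ]
  have hmeans : |Fintype.card α * (∑ x, rowMean P (φ x) - Fintype.card α * 𝔼 v, rowMean P v)| ≤
      Fintype.card α * (Fintype.card V : ℝ) := by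
    rw [abs_mul, Nat.abs_cast]
    gcongr
    exact hφ.abs_sum_comp_sub_card_mul_expect_le (abs_rowMean_le_one P)
  calc |∑ x, starSum (P ∘ Sym2.map φ) x - Fintype.card α ^ 2 * 𝔼 v, rowMean P v|
      = |∑ x, (starSum (P ∘ Sym2.map φ) x - Fintype.card α * rowMean P (φ x)) +
          Fintype.card α * (∑ x, rowMean P (φ x) - Fintype.card α * 𝔼 v, rowMean P v)| := by
        rw [sum_sub_distrib, ← mul_sum]
        ring_nf
    _ ≤ Fintype.card α * (Fintype.card V + 1) + Fintype.card α * Fintype.card V :=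
        (abs_add_le _ _).trans (add_le_add hrows hmeans)
    _ = Fintype.card α * (2 * Fintype.card V + 1) := by ring

end BlowUp

lemma eventually_mul_natCast_add_le {a b : ℝ} (hab : a < b) (C : ℝ) :
    ∀ᶠ n : ℕ in atTop, a * n + C ≤ b * n := by
  have hlim : Tendsto (fun n : ℕ ↦ (b - a) * n) atTop atTop :=
    tendsto_natCast_atTop_atTop.const_mul_atTop (sub_pos.2 hab)
  filter_upwards [hlim.eventually_ge_atTop C] with n hn
  linarith

theorem eventually_exists_forall_le_abs_starSum {V : Type*} [Fintype V] [Nonempty V]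
    (P : Sym2 V → ℤˣ) {a b : ℝ} (ha : ∀ v, a < |rowMean P v|) (hb : |𝔼 v, rowMean P v| < b) :
    ∀ᶠ n : ℕ in atTop, ∃ c : Sym2 (Fin n) → ℤˣ,
      (∀ x, a * n ≤ |starSum c x|) ∧ |∑ x, starSum c x| ≤ b * (n * (n - 1)) := by
  filter_upwards [eventually_all.2 fun v ↦
      eventually_mul_natCast_add_le (ha v) (Fintype.card V + 1),
    eventually_mul_natCast_add_le hb (2 * Fintype.card V + 1 + b)] with n hstar htotal
  classical
  obtain ⟨φ, hφ⟩ := exists_isEquitable (V := V) n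
  refine ⟨P ∘ Sym2.map φ, fun x ↦ ?_, ?_⟩
  · have hdev := hφ.abs_starSum_sub_le P x
    rw [Fintype.card_fin, abs_sub_comm] at hdev
    have hle := (abs_sub_abs_le_abs_sub _ _).trans hdev
    rw [abs_mul, Nat.abs_cast] at hle
    linarith [hstar (φ x)]
  · have hdev := hφ.abs_sum_starSum_sub_le P
    rw [Fintype.card_fin] at hdev
    have hle := (abs_sub_abs_le_abs_sub _ _).trans hdev
    rw [abs_mul, abs_pow, Nat.abs_cast] at hle
    linarith [mul_le_mul_of_nonneg_left htotal n.cast_nonneg]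

section Pattern

variable {G : Type*}

/-- The pattern on `G × G` built from a two-colouring `s` of `G`: the class `s = 1` of the first
coordinate spans a red clique and the class `s = -1` a blue one, while a pair of vertices from
different classes gets colour `-s (b₁ + b₂)`, where `b₁`, `b₂` are their second coordinates. -/
def splitPattern [AddCommMagma G] (s : G → ℤˣ) : Sym2 (G × G) → ℤˣ :=
  Sym2.lift ⟨fun p q ↦ if s p.1 = s q.1 then s p.1 else -s (p.2 + q.2), fun p q ↦ by
    by_cases h : s p.1 = s q.1
    · simp only [h, if_true]
    · simp only [if_neg h, if_neg (Ne.symm h), add_comm]⟩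

-- For signs `x` and `y`, the indicators of `x = y` and `x ≠ y` are `(1 + x * y) / 2` and
-- `(1 - x * y) / 2`.
lemma coe_splitPattern_mk [AddCommMagma G] (s : G → ℤˣ) (p q : G × G) :
    ((splitPattern s s(p, q) : ℤ) : ℝ) =
      ((s p.1 : ℤ) + (s q.1 : ℤ) - (1 - (s p.1 : ℤ) * (s q.1 : ℤ)) * (s (p.2 + q.2) : ℤ)) / 2 := by
  rw [splitPattern, Sym2.lift_mk]
  obtain hp | hp := Int.units_eq_one_or (s p.1) <;>
    obtain hq | hq := Int.units_eq_one_or (s q.1) <;> norm_num [hp, hq, neg_div]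

variable [AddCommGroup G] [Fintype G]

lemma rowMean_splitPattern (s : G → ℤˣ) (p : G × G) :
    rowMean (splitPattern s) p = (s p.1 : ℤ) * ((1 + (𝔼 g, ((s g : ℤ) : ℝ)) ^ 2) / 2) := by
  have htranslate : 𝔼 b, ((s (p.2 + b) : ℤ) : ℝ) = 𝔼 g, ((s g : ℤ) : ℝ) :=
    Fintype.expect_equiv (Equiv.addLeft p.2) _ _ fun _ ↦ rfl
  have hcolumn (a : G) : 𝔼 b, ((splitPattern s s(p, (a, b)) : ℤ) : ℝ) =
      ((s p.1 : ℤ) + (s a : ℤ) - (1 - (s p.1 : ℤ) * (s a : ℤ)) * 𝔼 g, ((s g : ℤ) : ℝ)) / 2 := by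
    simp only [coe_splitPattern_mk, ← expect_div, expect_sub_distrib, ← mul_expect,
      Fintype.expect_const, htranslate]
  rw [rowMean, ← univ_product_univ, expect_product]
  simp only [hcolumn, ← expect_div, expect_sub_distrib, expect_add_distrib, ← expect_mul,
    ← mul_expect, Fintype.expect_const]
  ring

lemma expect_rowMean_splitPattern (s : G → ℤˣ) :
    𝔼 p, rowMean (splitPattern s) p =
      (𝔼 g, ((s g : ℤ) : ℝ)) * ((1 + (𝔼 g, ((s g : ℤ) : ℝ)) ^ 2) / 2) := by
  simp only [rowMean_splitPattern, ← expect_mul]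
  rw [← univ_product_univ, expect_product]
  simp only [Fintype.expect_const]

end Pattern

lemma exists_sum_units_int_eq {ι : Type*} [Fintype ι] {k : ℕ} (hk : k ≤ Fintype.card ι) :
    ∃ s : ι → ℤˣ, ∑ i, ((s i : ℤ) : ℝ) = 2 * k - Fintype.card ι := by
  classical
  obtain ⟨A, -, hA⟩ := exists_subset_card_eq (s := (univ : Finset ι)) hk
  refine ⟨fun i ↦ if i ∈ A then 1 else -1, ?_⟩
  rw [sum_units_int_eq_two_mul_card_sub_card, ← hA]
  congr
  ext i
  by_cases hi : i ∈ A <;> simp [hi]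

lemma exists_zmod_expect_units_int_eq_inv (M : ℕ) [NeZero M] :
    ∃ s : ZMod (2 * M) → ℤˣ, 𝔼 g, ((s g : ℤ) : ℝ) = (M : ℝ)⁻¹ := by
  have hM : 0 < M := Nat.pos_of_neZero M
  obtain ⟨s, hs⟩ := exists_sum_units_int_eq (ι := ZMod (2 * M)) (k := M + 1)
    (by rw [ZMod.card]; omega)
  refine ⟨s, ?_⟩
  rw [Fintype.expect_eq_sum_div_card, hs, ZMod.card]
  push_cast
  field_simp
  ring

lemma exists_natCast_inv_mem_Ioc {x : ℝ} (hx : 0 < x) (hx1 : x ≤ 1) :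
    ∃ M : ℕ, M ≠ 0 ∧ (M : ℝ)⁻¹ ∈ Set.Ioc (x / 2) x := by
  have hM : 0 < ⌈x⁻¹⌉₊ := Nat.ceil_pos.2 (inv_pos.2 hx)
  refine ⟨⌈x⁻¹⌉₊, hM.ne', ?_, inv_le_of_inv_le₀ hx (Nat.le_ceil _)⟩
  rw [lt_inv_comm₀ (by positivity) (by positivity), inv_div]
  have hceil := Nat.ceil_lt_add_one (inv_pos.2 hx).le
  have hinv := (one_le_inv₀ hx).2 hx1
  rw [div_eq_mul_inv]
  linarith

lemma exists_pattern_forall_lt_abs_rowMean {ε : ℝ} (hε : 0 < ε) (hε' : ε < 1 / 6) :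
    ∃ (V : Type) (_ : Fintype V) (_ : Nonempty V) (P : Sym2 V → ℤˣ),
      (∀ v, 1 / 2 + ε ^ 2 < |rowMean P v|) ∧ |𝔼 v, rowMean P v| < 2 * ε := by
  obtain ⟨M, hM, hlow, hupp⟩ :=
    exists_natCast_inv_mem_Ioc (x := 3 * ε) (by positivity) (by linarith)
  have : NeZero M := ⟨hM⟩
  obtain ⟨s, hs⟩ := exists_zmod_expect_units_int_eq_inv M
  refine ⟨ZMod (2 * M) × ZMod (2 * M), inferInstance, inferInstance,
    splitPattern s, fun v ↦ ?_, ?_⟩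
  · rw [rowMean_splitPattern, hs, abs_mul, abs_unit_intCast, one_mul, abs_of_pos (by positivity)]
    nlinarith
  · rw [expect_rowMean_splitPattern, hs, abs_of_pos (by positivity)]
    have hsq : ((M : ℝ)⁻¹) ^ 2 ≤ 1 / 4 := by nlinarith
    nlinarith

end

/-- There is `ε₀ > 0` such that for every `0 < ε < ε₀` there is `n₀`
such that for all `n ≥ n₀` there is a red/blue colouring `c` of the edges of `K_n`
(red = `+1`, blue = `-1`) whose red density `d_R` satisfies `1/2 - ε ≤ d_R ≤ 1/2 + ε`,
and such that every copy `T` of the star on `n` vertices (i.e. every star centred at a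
vertex `x`) satisfies `|c(T)| ≥ (1/2 + ε²)n`. -/
theorem unbalanced_stars_in_almost_balanced_colouring :
    ∃ ε₀ : ℝ, 0 < ε₀ ∧ ∀ ε : ℝ, 0 < ε → ε < ε₀ →
      ∃ n₀ : ℕ, ∀ n : ℕ, n₀ ≤ n →
        ∃ c : Sym2 (Fin n) → ℤ,
          (∀ e ∈ (⊤ : SimpleGraph (Fin n)).edgeFinset, c e = 1 ∨ c e = -1) ∧
          (1 / 2 - ε ≤
              (((⊤ : SimpleGraph (Fin n)).edgeFinset.filter fun e => c e = 1).card : ℝ) /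
                ((n : ℝ) * ((n : ℝ) - 1) / 2) ∧
            (((⊤ : SimpleGraph (Fin n)).edgeFinset.filter fun e => c e = 1).card : ℝ) /
                ((n : ℝ) * ((n : ℝ) - 1) / 2) ≤ 1 / 2 + ε) ∧
          ∀ x : Fin n,
            (1 / 2 + ε ^ 2) * n ≤
              |(∑ w ∈ Finset.univ.filter fun w => w ≠ x, c s(x, w) : ℝ)| := by
  refine ⟨1 / 6, by norm_num, fun ε hε hε' ↦ ?_⟩
  obtain ⟨V, _, _, P, hrow, htotal⟩ := exists_pattern_forall_lt_abs_rowMean hε hε'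
  obtain ⟨n₀, hn₀⟩ := Filter.eventually_atTop.1
    ((eventually_exists_forall_le_abs_starSum P hrow htotal).and (Filter.eventually_ge_atTop 2))
  refine ⟨n₀, fun n hn ↦ ?_⟩
  obtain ⟨⟨c, hstar, hsum⟩, hn2⟩ := hn₀ n hn
  refine ⟨fun e ↦ c e, fun e _ ↦ Int.isUnit_iff.1 (c e).isUnit, ?_, hstar⟩
  have hdensity := abs_le.1 <|
    abs_redDensity_sub_half_le c (by simpa using hn2) (by simpa using hsum)
  rw [Fintype.card_fin] at hdensity
  constructor <;> linarith
end
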